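/- Fix n : ℕ and a level function c : Fin (n+1) → ℝ. Let σ_c := {a : Fin (n+1) → ℝ | ∀ i j, c i ≤ c j → a i ≤ a j}, and for v : ℝ let λ_{c,v} := {p : (Fin (n+1) → ℝ) × ℝ | ∀ i, (c i ≤ v → p.1 i ≤ p.2) ∧ (v ≤ c i → p.2 ≤ p.1 i)}. Then σ_c = ⋂_{v ∈ Set.range c} (Prod.fst '' λ_{c,v}); that is, every permutahedral cone is the intersection of the images under the projection of finitely many cones of the minimal tropical scaffold. -/

import Mathlib

section

variable {ι β : Type*} (α : Type*) [Preorder α] [Preorder β]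

/-- The cone `σ_c` of the fan `Σ_n`: the configurations of points `a i`, labelled by `ι`, that
respect the total preorder on the labels. That preorder is encoded by the levels `c i`, which may
lie in another order than the points. -/
def permutahedralCone (c : ι → β) : Set (ι → α) :=
  {a | ∀ i j, c i ≤ c j → a i ≤ a j}

/-- The cone `λ_{c,v}` of the minimal tropical scaffold `Λ₀`: an auxiliary point, the second
coordinate of `p`, is placed at level `v` among labelled points at levels `c i`. The labelled points
are compared with the auxiliary point only, not with each other. -/
def scaffoldCone (c : ι → β) (v : β) : Set ((ι → α) × α) :=
  {p | ∀ i, (c i ≤ v → p.1 i ≤ p.2) ∧ (v ≤ c i → p.2 ≤ p.1 i)}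

theorem fst_image_scaffoldCone_apply (c : ι → β) (k : ι) :
    Prod.fst '' scaffoldCone α c (c k) =
      {a | ∀ i, (c i ≤ c k → a i ≤ a k) ∧ (c k ≤ c i → a k ≤ a i)} := by
  ext a
  constructor
  · rintro ⟨⟨a, x⟩, hx, rfl⟩ i
    have le_x : a k ≤ x := (hx k).1 le_rfl
    have x_le : x ≤ a k := (hx k).2 le_rfl
    exact ⟨fun hik ↦ ((hx i).1 hik).trans x_le, fun hki ↦ le_x.trans ((hx i).2 hki)⟩
  · intro ha
    exact ⟨(a, a k), ha, rfl⟩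

theorem permutahedral_cone_eq_iInter_proj_scaffold_general (c : ι → β) :
    permutahedralCone α c = ⋂ v ∈ Set.range c, Prod.fst '' scaffoldCone α c v := by
  simp only [Set.biInter_range, fst_image_scaffoldCone_apply]
  ext a
  rw [Set.mem_iInter]
  exact ⟨fun ha k i ↦ ⟨ha i k, ha k i⟩, fun ha i j ↦ (ha j i).1⟩

end

/-- Every permutahedral cone is the intersection of the images, under the projection
forgetting the auxiliary coordinate, of finitely many cones of the minimal tropical
scaffold. -/
theorem permutahedral_cone_eq_iInter_proj_scaffold (n : ℕ) (c : Fin (n + 1) → ℝ) :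
    {a : Fin (n + 1) → ℝ | ∀ i j, c i ≤ c j → a i ≤ a j} =
      ⋂ v ∈ Set.range c,
        Prod.fst '' {p : (Fin (n + 1) → ℝ) × ℝ |
          ∀ i, (c i ≤ v → p.1 i ≤ p.2) ∧ (v ≤ c i → p.2 ≤ p.1 i)} :=
  permutahedral_cone_eq_iInter_proj_scaffold_general ℝ c
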